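/- Let S be a subset of ℝ[x₁,…,x_n] containing r² = Σxᵢ², and let B be the subalgebra generated by S. If for all f, g ∈ S both Δf ∈ B and ⟨∇f, ∇g⟩ ∈ B, then B is a Laplacian algebra, i.e., Δ(B) ⊆ B. Conversely, if B is Laplacian then Δf, ⟨∇f,∇g⟩ ∈ B for all f,g ∈ S. -/

import Mathlib

open MvPolynomial

/-- The Laplacian Δ = Σᵢ ∂²/∂xᵢ². -/
noncomputable def lap {n : ℕ} (f : MvPolynomial (Fin n) ℝ) : MvPolynomial (Fin n) ℝ :=
  ∑ i, pderiv i (pderiv i f)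

/-- ⟨∇f, ∇g⟩ = Σᵢ (∂f/∂xᵢ)(∂g/∂xᵢ). -/
noncomputable def gradInner {n : ℕ} (f g : MvPolynomial (Fin n) ℝ) :
    MvPolynomial (Fin n) ℝ :=
  ∑ i, pderiv i f * pderiv i g

/-- r² = x₁² + ⋯ + xₙ². -/
noncomputable def rsq {n : ℕ} : MvPolynomial (Fin n) ℝ := ∑ i, X i ^ 2

section GradInner

variable {n : ℕ} (f g h : MvPolynomial (Fin n) ℝ)

theorem lap_add : lap (f + g) = lap f + lap g := by
  simp [lap, Finset.sum_add_distrib]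

theorem lap_algebraMap (c : ℝ) : lap (algebraMap ℝ (MvPolynomial (Fin n) ℝ) c) = 0 := by
  simp [lap, algebraMap_eq]

theorem lap_mul : lap (f * g) = f * lap g + g * lap f + 2 * gradInner f g := by
  simp only [lap, gradInner, Finset.mul_sum, ← Finset.sum_add_distrib]
  refine Finset.sum_congr rfl fun i _ => ?_
  simp only [pderiv_mul, map_add]
  ring

theorem gradInner_comm : gradInner f g = gradInner g f := by
  simp [gradInner, mul_comm]

theorem gradInner_algebraMap_left (c : ℝ) :
    gradInner (algebraMap ℝ (MvPolynomial (Fin n) ℝ) c) g = 0 := by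
  simp [gradInner, algebraMap_eq]

theorem gradInner_add_left : gradInner (f + g) h = gradInner f h + gradInner g h := by
  simp [gradInner, add_mul, Finset.sum_add_distrib]

theorem gradInner_mul_left :
    gradInner (f * g) h = f * gradInner g h + g * gradInner f h := by
  simp only [gradInner, Finset.mul_sum, ← Finset.sum_add_distrib]
  refine Finset.sum_congr rfl fun i _ => ?_
  rw [pderiv_mul]
  ring

end GradInner

theorem gradInner_mem_of_mem_adjoin_left {n : ℕ} {S : Set (MvPolynomial (Fin n) ℝ)}
    {g : MvPolynomial (Fin n) ℝ} (hg : ∀ f ∈ S, gradInner f g ∈ Algebra.adjoin ℝ S)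
    {f : MvPolynomial (Fin n) ℝ} (hf : f ∈ Algebra.adjoin ℝ S) :
    gradInner f g ∈ Algebra.adjoin ℝ S := by
  induction hf using Algebra.adjoin_induction with
  | mem f hf => exact hg f hf
  | algebraMap c => rw [gradInner_algebraMap_left]; exact zero_mem _
  | add f₁ f₂ _ _ h₁ h₂ => rw [gradInner_add_left]; exact add_mem h₁ h₂
  | mul f₁ f₂ hf₁ hf₂ h₁ h₂ =>
    rw [gradInner_mul_left]
    exact add_mem (mul_mem hf₁ h₂) (mul_mem hf₂ h₁)

theorem gradInner_mem_adjoin {n : ℕ} {S : Set (MvPolynomial (Fin n) ℝ)}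
    (hS : ∀ f ∈ S, ∀ g ∈ S, gradInner f g ∈ Algebra.adjoin ℝ S)
    {f g : MvPolynomial (Fin n) ℝ} (hf : f ∈ Algebra.adjoin ℝ S) (hg : g ∈ Algebra.adjoin ℝ S) :
    gradInner f g ∈ Algebra.adjoin ℝ S := by
  refine gradInner_mem_of_mem_adjoin_left (fun f' hf' => ?_) hf
  rw [gradInner_comm]
  exact gradInner_mem_of_mem_adjoin_left (fun g' hg' => hS g' hg' f' hf') hg

theorem gradInner_mem_of_lap_mem {n : ℕ} {B : Subalgebra ℝ (MvPolynomial (Fin n) ℝ)}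
    (hB : ∀ f ∈ B, lap f ∈ B) {f g : MvPolynomial (Fin n) ℝ} (hf : f ∈ B) (hg : g ∈ B) :
    gradInner f g ∈ B := by
  have key : gradInner f g = (1 / 2 : ℝ) • (lap (f * g) - f * lap g - g * lap f) := by
    have h2 : lap (f * g) - f * lap g - g * lap f = (2 : ℝ) • gradInner f g := by
      rw [lap_mul, ofNat_smul_eq_nsmul, nsmul_eq_mul]
      push_cast
      ring
    rw [h2, smul_smul]
    norm_num
  rw [key]
  exact B.smul_mem (sub_mem (sub_mem (hB _ (mul_mem hf hg)) (mul_mem hf (hB g hg)))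
    (mul_mem hg (hB f hf))) _

/-- The subalgebra B generated by a set S containing r² is Laplacian iff
Δf ∈ B and ⟨∇f,∇g⟩ ∈ B for all f, g ∈ S. -/
theorem laplacian_iff_generators {n : ℕ} (S : Set (MvPolynomial (Fin n) ℝ))
    (hrS : rsq ∈ S) :
    (∀ f ∈ S, ∀ g ∈ S, lap f ∈ Algebra.adjoin ℝ S ∧
        gradInner f g ∈ Algebra.adjoin ℝ S) ↔
      (∀ f ∈ Algebra.adjoin ℝ S, lap f ∈ Algebra.adjoin ℝ S) := by
  constructor
  · intro hS f hf
    induction hf using Algebra.adjoin_induction with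
    | mem f hf => exact (hS f hf f hf).1
    | algebraMap c => rw [lap_algebraMap]; exact zero_mem _
    | add f g _ _ h₁ h₂ => rw [lap_add]; exact add_mem h₁ h₂
    | mul f g hf hg h₁ h₂ =>
      rw [lap_mul]
      exact add_mem (add_mem (mul_mem hf h₂) (mul_mem hg h₁))
        (mul_mem (ofNat_mem _ 2)
          (gradInner_mem_adjoin (fun f hf g hg => (hS f hf g hg).2) hf hg))
  · intro hB f hf g hg
    have hf' := Algebra.subset_adjoin (R := ℝ) hf
    exact ⟨hB f hf', gradInner_mem_of_lap_mem hB hf' (Algebra.subset_adjoin hg)⟩
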